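/- arXiv:1603.02533 — 2 statements merged into one kernel-verified Lean document; each statement's English description precedes it below -/
import Mathlib

section
/- Let p : ℝ^n × ℝ^m → ℝ^n and q : ℝ^n × ℝ^m → ℝ^m be homogeneous polynomials of degrees N ≥ 2 and M ≥ 2 respectively. Then the constants A_p, B_q, B_p, a_p and b_p associated with V_ρ are finite and satisfy |a_p| ≤ b_p, B_p ≥ A_p, a_p ≥ A_p/N and B_p ≥ N a_p; in particular if a_p > 0 then B_p ≥ N a_p > 0. Moreover, if 0 < ρ̄ ≤ ρ and Ā_p, B̄_p, B̄_q, ā_p, b̄_p denote the corresponding constants computed on V_{ρ̄}, then Ā_p ≥ A_p, B̄_p ≤ B_p, B̄_q ≥ B_q, ā_p ≥ a_p and b̄_p = b_p. -/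
open Metric Set Filter Asymptotics Topology

noncomputable section

section Defs

variable {E F G : Type*} [NormedAddCommGroup E] [NormedSpace ℝ E]
  [NormedAddCommGroup F] [NormedSpace ℝ F] [NormedAddCommGroup G] [NormedSpace ℝ G]

/-- `p` is (the diagonal of) a continuous homogeneous polynomial map of degree `N`. -/
def IsHomogPoly (N : ℕ) (p : E → G) : Prop :=
  ∃ P : ContinuousMultilinearMap ℝ (fun _ : Fin N => E) G, ∀ x, p x = P fun _ => x

/-- positively homogeneous function of degree `j`. -/
def IsHomogFun (j : ℕ) (f : E → G) : Prop :=
  ∀ t : ℝ, 0 < t → ∀ x : E, f (t • x) = t ^ j • f x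

/-- `V` is star-shaped with respect to the origin: `0 ∈ ∂V` and `t • x ∈ V` for `x ∈ V`,
`t ∈ (0,1)`. -/
def StarShaped0 (V : Set E) : Prop :=
  0 ∈ frontier V ∧ ∀ x ∈ V, ∀ t : ℝ, t ∈ Set.Ioo (0 : ℝ) 1 → t • x ∈ V

/-- `V_ρ = V ∩ B_ρ`. -/
def Vrho (V : Set E) (ρ : ℝ) : Set E := V ∩ ball 0 ρ

/-- `h(x) = O(‖x‖^k)` on the set `S` (real exponent, global constant). -/
def BigOOn (h : E → G) (S : Set E) (k : ℝ) : Prop :=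
  ∃ C : ℝ, ∀ x ∈ S, ‖h x‖ ≤ C * ‖x‖ ^ k

/-- The constant `a_p`. -/
def apC (p : E × F → E) (V : Set E) (ρ : ℝ) (N : ℕ) : ℝ :=
  -sSup ((fun x : E => (‖x + p (x, 0)‖ - ‖x‖) / ‖x‖ ^ N) '' Vrho V ρ)

/-- The constant `b_p`. -/
def bpC (p : E × F → E) (V : Set E) (ρ : ℝ) (N : ℕ) : ℝ :=
  sSup ((fun x : E => ‖p (x, 0)‖ / ‖x‖ ^ N) '' Vrho V ρ)

/-- The constant `A_p`. -/
def ApC (p : E × F → E) (V : Set E) (ρ : ℝ) (N : ℕ) : ℝ :=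
  -sSup ((fun x : E =>
      (‖ContinuousLinearMap.id ℝ E + fderiv ℝ (fun z : E => p (z, 0)) x‖ - 1) / ‖x‖ ^ (N - 1))
    '' Vrho V ρ)

/-- The constant `B_p`. -/
def BpC (p : E × F → E) (V : Set E) (ρ : ℝ) (N : ℕ) : ℝ :=
  sSup ((fun x : E =>
      (‖ContinuousLinearMap.id ℝ E - fderiv ℝ (fun z : E => p (z, 0)) x‖ - 1) / ‖x‖ ^ (N - 1))
    '' Vrho V ρ)

/-- The constant `B_q`. -/
def BqC (q : E × F → F) (V : Set E) (ρ : ℝ) (M : ℕ) : ℝ :=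
  -sSup ((fun x : E =>
      (‖ContinuousLinearMap.id ℝ F - fderiv ℝ (fun y : F => q (x, y)) 0‖ - 1) / ‖x‖ ^ (M - 1))
    '' Vrho V ρ)

/-- The constant `c_p`. -/
def cpC (p : E × F → E) (q : E × F → F) (V : Set E) (ρ : ℝ) (N M : ℕ) : ℝ :=
  if BqC q V ρ M ≤ 0 then apC p V ρ N else bpC p V ρ N

/-- The constant `d_p`. -/
def dpC (p : E × F → E) (V : Set E) (ρ : ℝ) (N : ℕ) : ℝ :=
  if ApC p V ρ N ≤ 0 then apC p V ρ N else bpC p V ρ N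

/-- `η = 1 + N - L`, `L = min{N,M}`. -/
def etaC (N M : ℕ) : ℝ := 1 + (N : ℝ) - (min N M : ℝ)

/-- `ℓ₀ = N - 1 + B_p/a_p + max{η - A_p/d_p, 0}`. -/
def ell0C (p : E × F → E) (V : Set E) (ρ : ℝ) (N M : ℕ) : ℝ :=
  (N : ℝ) - 1 + BpC p V ρ N / apC p V ρ N + max (etaC N M - ApC p V ρ N / dpC p V ρ N) 0

/-- `ℓ̃ = N - 1 + B_p/a_p + (η - 1)`. -/
def elltC (p : E × F → E) (V : Set E) (ρ : ℝ) (N M : ℕ) : ℝ :=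
  (N : ℝ) - 1 + BpC p V ρ N / apC p V ρ N + (etaC N M - 1)

/-- The optimal constant in hypothesis H3. -/
def CIC (p : E × F → E) (V : Set E) (ρ : ℝ) (N : ℕ) : ℝ :=
  sInf ((fun x : E => infDist (x + p (x, 0)) (Vrho V ρ)ᶜ / ‖x‖ ^ N) '' Vrho V ρ)

/-- Hypothesis H1. -/
def HypH1 (p : E × F → E) (V : Set E) (ρ : ℝ) (N : ℕ) : Prop := 0 < apC p V ρ N

/-- Hypothesis H2. -/
def HypH2 (p : E × F → E) (q : E × F → F) (V : Set E) (ρ : ℝ) (N M : ℕ) : Prop :=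
  (∀ x ∈ Vrho V ρ, q (x, 0) = 0) ∧
  (M < N → 0 < BqC q V ρ M) ∧ (M = N → -(N : ℝ) * apC p V ρ N < BqC q V ρ M)

/-- Hypothesis H3. -/
def HypH3 (p : E × F → E) (V : Set E) (ρ : ℝ) (N : ℕ) : Prop :=
  ∃ C > (0 : ℝ), ∀ x ∈ Vrho V ρ, C * ‖x‖ ^ N ≤ infDist (x + p (x, 0)) (Vrho V ρ)ᶜ

/-- Hypothesis H1'. -/
def HypH1' (p : E × F → E) (V : Set E) (ρ : ℝ) (N M : ℕ) : Prop :=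
  0 < apC p V ρ N ∧ (N < M → -1 < ApC p V ρ N / dpC p V ρ N)

/-- Hypothesis H2'. -/
def HypH2' (p : E × F → E) (q : E × F → F) (V : Set E) (ρ : ℝ) (N M : ℕ) : Prop :=
  (∀ x ∈ Vrho V ρ, q (x, 0) = 0) ∧
  (M < N → 0 < BqC q V ρ M) ∧
  (M = N → max (1 - ApC p V ρ N / dpC p V ρ N) 0 < 2 + BqC q V ρ M / cpC p q V ρ N M)

/-- `F` is in parabolic form of degrees `(N, M)` on `U`. -/
def ParabolicForm (U : Set (E × F)) (Fm : E × F → E × F) (p : E × F → E) (q : E × F → F)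
    (N M : ℕ) : Prop :=
  2 ≤ N ∧ 2 ≤ M ∧ IsHomogPoly N p ∧ IsHomogPoly M q ∧
    (fun z : E × F => (Fm z).1 - z.1 - p z) =O[𝓝[U] 0] (fun z : E × F => ‖z‖ ^ (N + 1)) ∧
    (fun z : E × F => (Fm z).2 - z.2 - q z) =O[𝓝[U] 0] (fun z : E × F => ‖z‖ ^ (M + 1))

/-- The local stable set `W^s_{V,ρ}` of the origin. -/
def stableSetLoc (Fm : E × F → E × F) (U : Set (E × F)) (V : Set E) (ρ : ℝ) : Set (E × F) :=
  {z ∈ U | (∀ k : ℕ, (Fm^[k] z).1 ∈ Vrho V ρ) ∧ Tendsto (fun k => Fm^[k] z) atTop (𝓝 0)}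

/-- `f` is `C¹` at the origin in the sense of the paper (Definition 2.3). -/
def C1AtOrigin (f : E → G) (S : Set E) : Prop :=
  (∃ ε > (0 : ℝ), ContDiffOn ℝ 1 f ((S ∩ ball 0 ε) \ {0})) ∧
  ∃ L : E →L[ℝ] G, Tendsto (fun x => fderivWithin ℝ f S x) (𝓝[S \ {0}] 0) (𝓝 L)

/-- `c < r` where `r` is an extended natural smoothness exponent. -/
def ltSmooth (c : ℝ) (r : ℕ∞) : Prop := ∃ k : ℕ, c < (k : ℝ) ∧ (k : ℕ∞) ≤ r

/-- The regularity degree `r_d`. -/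
def rdC (p : E × F → E) (V : Set E) (ρ : ℝ) (N M : ℕ) (r : ℕ) : ℕ :=
  sSup {k : ℕ |
    (etaC N M - ApC p V ρ N / dpC p V ρ N) * k < (r : ℝ) - BpC p V ρ N / apC p V ρ N - N + 1}

/-- The regularity degree `r_f` of the formal approximation. -/
def rfC (p : E × F → E) (q : E × F → F) (V : Set E) (ρ : ℝ) (N M : ℕ) : ℕ :=
  if M = N then
    sSup {k : ℕ | (1 - ApC p V ρ N / dpC p V ρ N) * k < 2 + BqC q V ρ M / cpC p q V ρ N M}
  else sSup {k : ℕ | (1 - ApC p V ρ N / dpC p V ρ N) * k < 2}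

end Defs

/-!
Freezing `y = 0` turns `p` into a homogeneous polynomial `f` on `E`, so `‖f x‖ = O(‖x‖ ^ N)` and
`‖Df(x)‖ = O(‖x‖ ^ (N - 1))`, which makes all the suprema finite. The inequalities with a factor
`N` come from Euler's identity `Df(x) x = N f(x)`: it expresses `(Id ± Df(x)) x` as `x ± N f(x)`,
and the triangle inequality is applied to
`N (x + f x) = (N - 1) x + (x + N f x)` and `(N + 1) x = (x - N f x) + N (x + f x)`.
Finally `‖f x‖ / ‖x‖ ^ N` is constant along rays, and every ray of `V` meets every `V_ρ`.
-/

section Multilinear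

variable {𝕜 ι : Type*} [NontriviallyNormedField 𝕜] [Fintype ι] [DecidableEq ι]
  {G : Type*} [NormedAddCommGroup G] [NormedSpace 𝕜 G]

theorem norm_multilinear_toContinuousLinearMap_le
    {E : ι → Type*} [∀ i, NormedAddCommGroup (E i)] [∀ i, NormedSpace 𝕜 (E i)]
    (P : ContinuousMultilinearMap 𝕜 E G) (m : ∀ i, E i) (i : ι) :
    ‖P.toContinuousLinearMap m i‖ ≤ ‖P‖ * ∏ j ∈ Finset.univ.erase i, ‖m j‖ := by
  refine ContinuousLinearMap.opNorm_le_bound _ (by positivity) fun y => ?_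
  have prod_update : ∏ j, ‖Function.update m i y j‖ =
      ‖y‖ * ∏ j ∈ Finset.univ.erase i, ‖m j‖ := by
    rw [← Finset.mul_prod_erase _ _ (Finset.mem_univ i), Function.update_self]
    congr 1
    exact Finset.prod_congr rfl fun j hj => by
      rw [Function.update_of_ne (Finset.ne_of_mem_erase hj)]
  calc ‖P (Function.update m i y)‖
      ≤ ‖P‖ * ∏ j, ‖Function.update m i y j‖ := P.le_opNorm _
    _ = ‖P‖ * (∏ j ∈ Finset.univ.erase i, ‖m j‖) * ‖y‖ := by rw [prod_update]; ring

variable {E : Type*} [NormedAddCommGroup E] [NormedSpace 𝕜 E]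

theorem hasFDerivAt_multilinear_diagonal
    (P : ContinuousMultilinearMap 𝕜 (fun _ : ι => E) G) (x : E) :
    HasFDerivAt (fun z => P fun _ => z) (∑ i, P.toContinuousLinearMap (fun _ => x) i) x := by
  simpa using HasFDerivAt.multilinear_comp P fun _ : ι => hasFDerivAt_id (𝕜 := 𝕜) x

end Multilinear

namespace IsHomogPoly

variable {E F G : Type*} [NormedAddCommGroup E] [NormedSpace ℝ E]
  [NormedAddCommGroup F] [NormedSpace ℝ F] [NormedAddCommGroup G] [NormedSpace ℝ G]
  {N : ℕ} {f : E → G}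

theorem comp_continuousLinearMap (hf : IsHomogPoly N f) (L : F →L[ℝ] E) :
    IsHomogPoly N fun x => f (L x) := by
  obtain ⟨P, hP⟩ := hf
  exact ⟨P.compContinuousLinearMap fun _ => L, fun x => hP (L x)⟩

theorem comp_prodMk_zero {f : E × F → G} (hf : IsHomogPoly N f) :
    IsHomogPoly N fun x => f (x, 0) :=
  hf.comp_continuousLinearMap (.inl ℝ E F)

theorem map_smul (hf : IsHomogPoly N f) (t : ℝ) (x : E) : f (t • x) = t ^ N • f x := by
  obtain ⟨P, hP⟩ := hf
  simpa [hP] using P.map_smul_univ (fun _ => t) fun _ => x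

theorem exists_norm_le (hf : IsHomogPoly N f) : ∃ C, ∀ x, ‖f x‖ ≤ C * ‖x‖ ^ N := by
  obtain ⟨P, hP⟩ := hf
  exact ⟨‖P‖, fun x => by simpa [hP] using P.le_opNorm fun _ => x⟩

theorem differentiable (hf : IsHomogPoly N f) : Differentiable ℝ f := by
  obtain ⟨P, hP⟩ := hf
  rw [funext hP]
  exact fun x => (hasFDerivAt_multilinear_diagonal P x).differentiableAt

theorem exists_norm_fderiv_le (hf : IsHomogPoly N f) :
    ∃ C, ∀ x, ‖fderiv ℝ f x‖ ≤ C * ‖x‖ ^ (N - 1) := by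
  obtain ⟨P, hP⟩ := hf
  refine ⟨N * ‖P‖, fun x => ?_⟩
  rw [funext hP, (hasFDerivAt_multilinear_diagonal P x).fderiv]
  calc ‖∑ i, P.toContinuousLinearMap (fun _ => x) i‖
      ≤ ∑ i, ‖P.toContinuousLinearMap (fun _ => x) i‖ := norm_sum_le _ _
    _ ≤ ∑ _i : Fin N, ‖P‖ * ‖x‖ ^ (N - 1) := Finset.sum_le_sum fun i _ => by
        simpa using norm_multilinear_toContinuousLinearMap_le P (fun _ => x) i
    _ = N * ‖P‖ * ‖x‖ ^ (N - 1) := by simp [mul_assoc]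

theorem fderiv_apply_self (hf : IsHomogPoly N f) (x : E) : fderiv ℝ f x x = (N : ℝ) • f x := by
  obtain ⟨P, hP⟩ := hf
  rw [funext hP, (hasFDerivAt_multilinear_diagonal P x).fderiv]
  simp [ContinuousMultilinearMap.toContinuousLinearMap, Nat.cast_smul_eq_nsmul]

theorem exists_norm_fderiv_prodMk_le {q : E × F → G} (hq : IsHomogPoly N q) :
    ∃ C, ∀ x, ‖fderiv ℝ (fun y => q (x, y)) 0‖ ≤ C * ‖x‖ ^ (N - 1) := by
  obtain ⟨C, hC⟩ := hq.exists_norm_fderiv_le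
  refine ⟨C, fun x => ?_⟩
  have partial_eq : fderiv ℝ (fun y => q (x, y)) 0 = fderiv ℝ q (x, 0) ∘L .inr ℝ E F :=
    ((hq.differentiable (x, 0)).hasFDerivAt.comp 0 (hasFDerivAt_prodMk_right x 0)).fderiv
  calc ‖fderiv ℝ (fun y => q (x, y)) 0‖
      ≤ ‖fderiv ℝ q (x, 0)‖ * ‖ContinuousLinearMap.inr ℝ E F‖ := by
        rw [partial_eq]; exact ContinuousLinearMap.opNorm_comp_le _ _
    _ ≤ ‖fderiv ℝ q (x, 0)‖ :=
        mul_le_of_le_one_right (norm_nonneg _) (ContinuousLinearMap.norm_inr_le_one ℝ E F)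
    _ ≤ C * ‖x‖ ^ (N - 1) := by simpa using hC (x, 0)

theorem norm_smul_div_norm_smul_pow (hf : IsHomogPoly N f) {t : ℝ} (ht : t ≠ 0) (x : E) :
    ‖f (t • x)‖ / ‖t • x‖ ^ N = ‖f x‖ / ‖x‖ ^ N := by
  rw [hf.map_smul, norm_smul, norm_smul, norm_pow, mul_pow]
  exact mul_div_mul_left _ _ (pow_ne_zero _ (norm_ne_zero_iff.2 ht))

end IsHomogPoly

section OperatorInequalities

variable {𝕜 E : Type*} [NontriviallyNormedField 𝕜] [NormedAddCommGroup E]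

theorem norm_id_sub_sub_one_le [NormedSpace 𝕜 E] (T : E →L[𝕜] E) :
    ‖ContinuousLinearMap.id 𝕜 E - T‖ - 1 ≤ ‖T‖ := by
  linarith [norm_sub_le (ContinuousLinearMap.id 𝕜 E) T,
    ContinuousLinearMap.norm_id_le (𝕜 := 𝕜) (E := E)]

variable [NormedSpace ℝ E]

theorem two_le_norm_id_add_add_norm_id_sub [Nontrivial E] (T : E →L[ℝ] E) :
    2 ≤ ‖ContinuousLinearMap.id ℝ E + T‖ + ‖ContinuousLinearMap.id ℝ E - T‖ :=
  calc (2 : ℝ) = ‖(2 : ℝ) • ContinuousLinearMap.id ℝ E‖ := by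
        rw [norm_smul, ContinuousLinearMap.norm_id, Real.norm_two, mul_one]
    _ = ‖(ContinuousLinearMap.id ℝ E + T) + (ContinuousLinearMap.id ℝ E - T)‖ := by
        congr 1; module
    _ ≤ _ := norm_add_le _ _

theorem mul_norm_add_sub_norm_le {T : E →L[ℝ] E} {x v : E} {c : ℝ} (hc : 1 ≤ c)
    (hT : T x = c • v) :
    c * (‖x + v‖ - ‖x‖) ≤ (‖ContinuousLinearMap.id ℝ E + T‖ - 1) * ‖x‖ := by
  have apply_le : ‖x + c • v‖ ≤ ‖ContinuousLinearMap.id ℝ E + T‖ * ‖x‖ := by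
    simpa [hT] using (ContinuousLinearMap.id ℝ E + T).le_opNorm x
  have triangle : c * ‖x + v‖ ≤ (c - 1) * ‖x‖ + ‖x + c • v‖ :=
    calc c * ‖x + v‖ = ‖(c - 1) • x + (x + c • v)‖ := by
          rw [← norm_smul_of_nonneg (by linarith)]; congr 1; module
      _ ≤ ‖(c - 1) • x‖ + ‖x + c • v‖ := norm_add_le _ _
      _ = _ := by rw [norm_smul_of_nonneg (by linarith)]
  linarith

theorem mul_norm_sub_norm_add_le {T : E →L[ℝ] E} {x v : E} {c : ℝ} (hc : 0 ≤ c)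
    (hT : T x = c • v) :
    c * (‖x‖ - ‖x + v‖) ≤ (‖ContinuousLinearMap.id ℝ E - T‖ - 1) * ‖x‖ := by
  have apply_le : ‖x - c • v‖ ≤ ‖ContinuousLinearMap.id ℝ E - T‖ * ‖x‖ := by
    simpa [hT] using (ContinuousLinearMap.id ℝ E - T).le_opNorm x
  have triangle : (c + 1) * ‖x‖ ≤ ‖x - c • v‖ + c * ‖x + v‖ :=
    calc (c + 1) * ‖x‖ = ‖(x - c • v) + c • (x + v)‖ := by
          rw [← norm_smul_of_nonneg (by linarith)]; congr 1; module
      _ ≤ ‖x - c • v‖ + ‖c • (x + v)‖ := norm_add_le _ _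
      _ = _ := by rw [norm_smul_of_nonneg hc]
  linarith

end OperatorInequalities

theorem div_pow_le_div_pow_sub_one {a b r : ℝ} {n : ℕ} (hn : n ≠ 0) (hr : 0 < r)
    (h : a ≤ b * r) : a / r ^ n ≤ b / r ^ (n - 1) := by
  rw [← pow_sub_one_mul hn r, div_le_div_iff₀ (by positivity) (by positivity)]
  linarith [mul_le_mul_of_nonneg_right h (pow_nonneg hr.le (n - 1))]

section ImageSup

variable {α : Type*} {s : Set α} {u w : α → ℝ}

theorem abs_csSup_image_le (hs : s.Nonempty) (hw : BddAbove (w '' s))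
    (h : ∀ x ∈ s, |u x| ≤ w x) : |sSup (u '' s)| ≤ sSup (w '' s) := by
  have le_sup : ∀ x ∈ s, |u x| ≤ sSup (w '' s) := fun x hx =>
    (h x hx).trans (le_csSup hw (mem_image_of_mem w hx))
  have hu : BddAbove (u '' s) :=
    ⟨sSup (w '' s), forall_mem_image.2 fun x hx => (abs_le.1 (le_sup x hx)).2⟩
  obtain ⟨x, hx⟩ := hs
  exact abs_le.2
    ⟨(abs_le.1 (le_sup x hx)).1.trans (le_csSup hu (mem_image_of_mem u hx)),
      csSup_le ⟨u x, mem_image_of_mem u hx⟩ <|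
        forall_mem_image.2 fun y hy => (abs_le.1 (le_sup y hy)).2⟩

theorem mul_neg_csSup_image_le {c : ℝ} (hc : 0 ≤ c) (hu : BddAbove (u '' s))
    (hw : BddAbove (w '' s)) {x : α} (hx : x ∈ s) (h : c * -u x ≤ w x) :
    c * -sSup (u '' s) ≤ sSup (w '' s) :=
  calc c * -sSup (u '' s) ≤ c * -u x := by
        gcongr; exact le_csSup hu (mem_image_of_mem u hx)
    _ ≤ w x := h
    _ ≤ sSup (w '' s) := le_csSup hw (mem_image_of_mem w hx)

theorem csSup_image_le_csSup_image_div {c : ℝ} (hc : 0 < c) (hs : s.Nonempty)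
    (hw : BddAbove (w '' s)) (h : ∀ x ∈ s, c * u x ≤ w x) :
    sSup (u '' s) ≤ sSup (w '' s) / c :=
  csSup_le (hs.image u) <| forall_mem_image.2 fun x hx =>
    (le_div_iff₀' hc).2 <| (h x hx).trans (le_csSup hw (mem_image_of_mem w hx))

end ImageSup

section BoundedQuotients

variable {E F : Type*} [NormedAddCommGroup E] [NormedAddCommGroup F] [NormedSpace ℝ F] {k : ℕ}

theorem bddAbove_image_div_norm_pow {g : E → ℝ} (hg : ∃ C, ∀ x, g x ≤ C * ‖x‖ ^ k)
    (S : Set E) : BddAbove ((fun x => g x / ‖x‖ ^ k) '' S) := by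
  obtain ⟨C, hC⟩ := hg
  refine ⟨|C|, forall_mem_image.2 fun x _ =>
    div_le_of_le_mul₀ (by positivity) (abs_nonneg C) ((hC x).trans ?_)⟩
  gcongr
  exact le_abs_self C

theorem bddAbove_image_norm_id_sub_div {D : E → F →L[ℝ] F}
    (hD : ∃ C, ∀ x, ‖D x‖ ≤ C * ‖x‖ ^ k) (S : Set E) :
    BddAbove ((fun x => (‖ContinuousLinearMap.id ℝ F - D x‖ - 1) / ‖x‖ ^ k) '' S) :=
  bddAbove_image_div_norm_pow
    (hD.imp fun _ hC x => (norm_id_sub_sub_one_le (D x)).trans (hC x)) S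

end BoundedQuotients

section StarShaped

variable {E : Type*} [NormedAddCommGroup E] {V : Set E} {ρ : ℝ}

theorem norm_pos_of_mem_Vrho (h0 : 0 ∉ V) {x : E} (hx : x ∈ Vrho V ρ) : 0 < ‖x‖ :=
  norm_pos_iff.2 (ne_of_mem_of_not_mem hx.1 h0)

theorem Vrho_mono {ρ' : ℝ} (h : ρ' ≤ ρ) : Vrho V ρ' ⊆ Vrho V ρ :=
  inter_subset_inter_right V (ball_subset_ball h)

variable [NormedSpace ℝ E]

theorem StarShaped0.nonempty_Vrho (hV : StarShaped0 V) (hρ : 0 < ρ) : (Vrho V ρ).Nonempty := by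
  rw [Vrho, inter_comm]
  exact mem_closure_iff.1 (frontier_subset_closure hV.1) _ isOpen_ball (mem_ball_self hρ)

theorem StarShaped0.exists_smul_mem_Vrho (hV : StarShaped0 V) (hρ : 0 < ρ) {x : E}
    (hx : x ∈ V) : ∃ t > (0 : ℝ), t • x ∈ Vrho V ρ := by
  have tendsto_zero : Tendsto (fun t : ℝ => t • x) (𝓝[>] 0) (𝓝 0) :=
    tendsto_nhdsWithin_of_tendsto_nhds <|
      Continuous.tendsto' (by fun_prop) 0 0 (zero_smul ℝ x)
  obtain ⟨t, ht_ball, ht⟩ := ((tendsto_zero.eventually (ball_mem_nhds 0 hρ)).and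
    (Ioo_mem_nhdsGT one_pos)).exists
  exact ⟨t, ht.1, hV.2 x hx t ht, ht_ball⟩

theorem StarShaped0.image_Vrho_eq {α : Type*} (hV : StarShaped0 V) (hρ : 0 < ρ) {g : E → α}
    (hg : ∀ t : ℝ, 0 < t → ∀ x, g (t • x) = g x) : g '' Vrho V ρ = g '' V := by
  refine (image_mono inter_subset_left).antisymm (image_subset_iff.2 fun x hx => ?_)
  obtain ⟨t, ht, htx⟩ := hV.exists_smul_mem_Vrho hρ hx
  exact ⟨t • x, htx, hg t ht x⟩

end StarShaped

namespace IsHomogPoly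

variable {E F : Type*} [NormedAddCommGroup E] [NormedSpace ℝ E]
  [NormedAddCommGroup F] [NormedSpace ℝ F] {N : ℕ} {p : E × F → E} {V : Set E} {ρ : ℝ}

theorem bddAbove_bpC (hp : IsHomogPoly N p) (S : Set E) :
    BddAbove ((fun x : E => ‖p (x, 0)‖ / ‖x‖ ^ N) '' S) :=
  bddAbove_image_div_norm_pow hp.comp_prodMk_zero.exists_norm_le S

theorem bddAbove_apC (hp : IsHomogPoly N p) (S : Set E) :
    BddAbove ((fun x : E => (‖x + p (x, 0)‖ - ‖x‖) / ‖x‖ ^ N) '' S) :=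
  bddAbove_image_div_norm_pow (hp.comp_prodMk_zero.exists_norm_le.imp fun _ hC x =>
    (sub_le_iff_le_add'.2 (norm_add_le x (p (x, 0)))).trans (hC x)) S

theorem bddAbove_BpC (hp : IsHomogPoly N p) (S : Set E) :
    BddAbove ((fun x : E =>
      (‖ContinuousLinearMap.id ℝ E - fderiv ℝ (fun z : E => p (z, 0)) x‖ - 1) / ‖x‖ ^ (N - 1))
      '' S) :=
  bddAbove_image_norm_id_sub_div hp.comp_prodMk_zero.exists_norm_fderiv_le S

theorem bddAbove_ApC (hp : IsHomogPoly N p) (S : Set E) :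
    BddAbove ((fun x : E =>
      (‖ContinuousLinearMap.id ℝ E + fderiv ℝ (fun z : E => p (z, 0)) x‖ - 1) / ‖x‖ ^ (N - 1))
      '' S) := by
  simpa only [sub_neg_eq_add] using bddAbove_image_norm_id_sub_div
    (D := fun x => -fderiv ℝ (fun z : E => p (z, 0)) x)
    (by simpa only [norm_neg] using hp.comp_prodMk_zero.exists_norm_fderiv_le) S

theorem bddAbove_BqC {M : ℕ} {q : E × F → F} (hq : IsHomogPoly M q) (S : Set E) :
    BddAbove ((fun x : E =>
      (‖ContinuousLinearMap.id ℝ F - fderiv ℝ (fun y : F => q (x, y)) 0‖ - 1) / ‖x‖ ^ (M - 1))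
      '' S) :=
  bddAbove_image_norm_id_sub_div hq.exists_norm_fderiv_prodMk_le S

theorem abs_apC_le_bpC (hp : IsHomogPoly N p) (hne : (Vrho V ρ).Nonempty) :
    |apC p V ρ N| ≤ bpC p V ρ N := by
  rw [apC, abs_neg]
  refine abs_csSup_image_le hne (hp.bddAbove_bpC _) fun x _ => ?_
  rw [abs_div, abs_of_nonneg (by positivity : 0 ≤ ‖x‖ ^ N)]
  gcongr
  simpa using abs_norm_sub_norm_le (x + p (x, 0)) x

theorem ApC_le_BpC (hp : IsHomogPoly N p) (h0 : 0 ∉ V) (hne : (Vrho V ρ).Nonempty) :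
    ApC p V ρ N ≤ BpC p V ρ N := by
  obtain ⟨x, hx⟩ := hne
  have : Nontrivial E := ⟨x, 0, norm_pos_iff.1 (norm_pos_of_mem_Vrho h0 hx)⟩
  rw [ApC, BpC, ← one_mul (-sSup _)]
  refine mul_neg_csSup_image_le zero_le_one (hp.bddAbove_ApC _) (hp.bddAbove_BpC _) hx ?_
  rw [one_mul, ← neg_div]
  gcongr
  linarith [two_le_norm_id_add_add_norm_id_sub (fderiv ℝ (fun z : E => p (z, 0)) x)]

theorem ApC_div_le_apC (hN : 1 ≤ N) (hp : IsHomogPoly N p) (h0 : 0 ∉ V)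
    (hne : (Vrho V ρ).Nonempty) : ApC p V ρ N / N ≤ apC p V ρ N := by
  rw [ApC, apC, neg_div, neg_le_neg_iff]
  refine csSup_image_le_csSup_image_div (by positivity) hne (hp.bddAbove_ApC _) fun x hx => ?_
  rw [← mul_div_assoc]
  exact div_pow_le_div_pow_sub_one (by positivity) (norm_pos_of_mem_Vrho h0 hx)
    (mul_norm_add_sub_norm_le (by exact_mod_cast hN) (hp.comp_prodMk_zero.fderiv_apply_self x))

theorem mul_apC_le_BpC (hN : 1 ≤ N) (hp : IsHomogPoly N p) (h0 : 0 ∉ V)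
    (hne : (Vrho V ρ).Nonempty) : N * apC p V ρ N ≤ BpC p V ρ N := by
  obtain ⟨x, hx⟩ := hne
  refine mul_neg_csSup_image_le N.cast_nonneg (hp.bddAbove_apC _) (hp.bddAbove_BpC _) hx ?_
  rw [← neg_div, neg_sub, ← mul_div_assoc]
  exact div_pow_le_div_pow_sub_one (by positivity) (norm_pos_of_mem_Vrho h0 hx)
    (mul_norm_sub_norm_add_le N.cast_nonneg (hp.comp_prodMk_zero.fderiv_apply_self x))

theorem bpC_eq_bpC (hp : IsHomogPoly N p) (hV : StarShaped0 V) (hρ : 0 < ρ) {ρ' : ℝ}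
    (hρ' : 0 < ρ') : bpC p V ρ' N = bpC p V ρ N := by
  have ray_invariant : ∀ t : ℝ, 0 < t → ∀ x : E,
      ‖p (t • x, 0)‖ / ‖t • x‖ ^ N = ‖p (x, 0)‖ / ‖x‖ ^ N := fun _ ht =>
    hp.comp_prodMk_zero.norm_smul_div_norm_smul_pow ht.ne'
  rw [bpC, bpC, hV.image_Vrho_eq hρ' ray_invariant, hV.image_Vrho_eq hρ ray_invariant]

end IsHomogPoly

theorem parabolic_constants_basic_properties_general
    {E F : Type*} [NormedAddCommGroup E] [NormedSpace ℝ E]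
    [NormedAddCommGroup F] [NormedSpace ℝ F]
    (N M : ℕ) (hN : 1 ≤ N)
    (p : E × F → E) (q : E × F → F) (hp : IsHomogPoly N p) (hq : IsHomogPoly M q)
    (V : Set E) (h0 : 0 ∉ V) (hVstar : StarShaped0 V) (ρ : ℝ) (hρ : 0 < ρ) :
    ((Vrho V ρ).Nonempty ∧
      BddAbove ((fun x : E => (‖x + p (x, 0)‖ - ‖x‖) / ‖x‖ ^ N) '' Vrho V ρ) ∧
      BddAbove ((fun x : E => ‖p (x, 0)‖ / ‖x‖ ^ N) '' Vrho V ρ) ∧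
      BddAbove ((fun x : E =>
          (‖ContinuousLinearMap.id ℝ E + fderiv ℝ (fun z : E => p (z, 0)) x‖ - 1) / ‖x‖ ^ (N - 1))
        '' Vrho V ρ) ∧
      BddAbove ((fun x : E =>
          (‖ContinuousLinearMap.id ℝ E - fderiv ℝ (fun z : E => p (z, 0)) x‖ - 1) / ‖x‖ ^ (N - 1))
        '' Vrho V ρ) ∧
      BddAbove ((fun x : E =>
          (‖ContinuousLinearMap.id ℝ F - fderiv ℝ (fun y : F => q (x, y)) 0‖ - 1) / ‖x‖ ^ (M - 1))
        '' Vrho V ρ)) ∧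
    |apC p V ρ N| ≤ bpC p V ρ N ∧
    ApC p V ρ N ≤ BpC p V ρ N ∧
    ApC p V ρ N / N ≤ apC p V ρ N ∧
    (N : ℝ) * apC p V ρ N ≤ BpC p V ρ N ∧
    (0 < apC p V ρ N → 0 < (N : ℝ) * apC p V ρ N ∧ (N : ℝ) * apC p V ρ N ≤ BpC p V ρ N) ∧
    (∀ ρ' : ℝ, 0 < ρ' → ρ' ≤ ρ →
      ApC p V ρ N ≤ ApC p V ρ' N ∧
      BpC p V ρ' N ≤ BpC p V ρ N ∧
      BqC q V ρ M ≤ BqC q V ρ' M ∧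
      apC p V ρ N ≤ apC p V ρ' N ∧
      bpC p V ρ' N = bpC p V ρ N) := by
  have hne := hVstar.nonempty_Vrho hρ
  have key := hp.mul_apC_le_BpC hN h0 hne
  refine ⟨⟨hne, hp.bddAbove_apC _, hp.bddAbove_bpC _, hp.bddAbove_ApC _, hp.bddAbove_BpC _,
    hq.bddAbove_BqC _⟩, hp.abs_apC_le_bpC hne, hp.ApC_le_BpC h0 hne, hp.ApC_div_le_apC hN h0 hne,
    key, fun ha => ⟨by positivity, key⟩, fun ρ' hρ' hle => ?_⟩
  have sSup_mono {g : E → ℝ} (hg : BddAbove (g '' Vrho V ρ)) :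
      sSup (g '' Vrho V ρ') ≤ sSup (g '' Vrho V ρ) :=
    csSup_le_csSup hg ((hVstar.nonempty_Vrho hρ').image g) (image_mono (Vrho_mono hle))
  exact ⟨neg_le_neg (sSup_mono (hp.bddAbove_ApC _)), sSup_mono (hp.bddAbove_BpC _),
    neg_le_neg (sSup_mono (hq.bddAbove_BqC _)), neg_le_neg (sSup_mono (hp.bddAbove_apC _)),
    hp.bpC_eq_bpC hVstar hρ hρ'⟩

/-- Lemma 2.2: finiteness, basic inequalities and monotonicity in `ρ`
of the constants `A_p, B_q, B_p, a_p, b_p` associated with `V_ρ`. -/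
theorem parabolic_constants_basic_properties
    {E F : Type*} [NormedAddCommGroup E] [NormedSpace ℝ E]
    [NormedAddCommGroup F] [NormedSpace ℝ F]
    (N M : ℕ) (hN : 2 ≤ N) (hM : 2 ≤ M)
    (p : E × F → E) (q : E × F → F) (hp : IsHomogPoly N p) (hq : IsHomogPoly M q)
    (V : Set E) (hVopen : IsOpen V) (hVstar : StarShaped0 V) (ρ : ℝ) (hρ : 0 < ρ) :
    -- the constants are finite, i.e. the defining suprema are over nonempty bounded sets
    ((Vrho V ρ).Nonempty ∧
      BddAbove ((fun x : E => (‖x + p (x, 0)‖ - ‖x‖) / ‖x‖ ^ N) '' Vrho V ρ) ∧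
      BddAbove ((fun x : E => ‖p (x, 0)‖ / ‖x‖ ^ N) '' Vrho V ρ) ∧
      BddAbove ((fun x : E =>
          (‖ContinuousLinearMap.id ℝ E + fderiv ℝ (fun z : E => p (z, 0)) x‖ - 1) / ‖x‖ ^ (N - 1))
        '' Vrho V ρ) ∧
      BddAbove ((fun x : E =>
          (‖ContinuousLinearMap.id ℝ E - fderiv ℝ (fun z : E => p (z, 0)) x‖ - 1) / ‖x‖ ^ (N - 1))
        '' Vrho V ρ) ∧
      BddAbove ((fun x : E =>
          (‖ContinuousLinearMap.id ℝ F - fderiv ℝ (fun y : F => q (x, y)) 0‖ - 1) / ‖x‖ ^ (M - 1))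
        '' Vrho V ρ)) ∧
    -- |a_p| ≤ b_p, A_p ≤ B_p, A_p/N ≤ a_p, N a_p ≤ B_p
    |apC p V ρ N| ≤ bpC p V ρ N ∧
    ApC p V ρ N ≤ BpC p V ρ N ∧
    ApC p V ρ N / N ≤ apC p V ρ N ∧
    (N : ℝ) * apC p V ρ N ≤ BpC p V ρ N ∧
    (0 < apC p V ρ N → 0 < (N : ℝ) * apC p V ρ N ∧ (N : ℝ) * apC p V ρ N ≤ BpC p V ρ N) ∧
    -- monotonicity with respect to the radius
    (∀ ρ' : ℝ, 0 < ρ' → ρ' ≤ ρ →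
      ApC p V ρ N ≤ ApC p V ρ' N ∧
      BpC p V ρ' N ≤ BpC p V ρ N ∧
      BqC q V ρ M ≤ BqC q V ρ' M ∧
      apC p V ρ N ≤ apC p V ρ' N ∧
      bpC p V ρ' N = bpC p V ρ N) :=
  parabolic_constants_basic_properties_general N M (by lia) p q hp hq V
    (fun h => hVstar.1.2 (hVopen.interior_eq.symm ▸ h)) hVstar ρ hρ
end
end

section
/- Let a, b > 0, let φ be the flow of the system ẋ₁ = −x₁², ẋ₂ = −a x₁ x₂, ẏ = b x₁ y + x₂³ on ℝ² × ℝ, and let F(x,y) = φ(1; x, y) be its time-1 map. Then: (i) there exists an open set V ⊆ ℝ², star-shaped with respect to the origin (one may take any open V contained in W = {(x₁,x₂) : |x₂| < (1−a)x₁ < 2/(a+1)} when a < 1), such that F satisfies hypotheses H1 and H2 on V for suitable ρ > 0 and norms; (ii) for x₁ > 0 one has the explicit iteration formulas F_x^n(x₁,x₂) = (x₁/(1+n x₁), x₂/(1+n x₁)^a) and F_y^n(x,y) = (1+n x₁)^b [y + x₂³ ∫₀^n (1+s x₁)^{−(b+3a)} ds]; (iii) if b + 3a ≤ 1, then for every (x₁,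 x₂) with x₁ > 0 and x₂ ≠ 0 and every y ∈ ℝ, the orbit F^n(x₁, x₂, y) does not converge to 0 as n → ∞ (since (1+n x₁)^b → ∞ and the integral ∫₀^∞ (1+s x₁)^{−(b+3a)} ds diverges, no choice of y makes F_y^n(x,y) → 0); consequently F has no stable invariant manifold of the origin over V. -/
/-!
The explicit solution of the toy system is the only one, because its polynomial vector field is
locally Lipschitz; it is autonomous, so the iterates of the time-one map are the solution at integer
times. When `b + 3a ≤ 1` the integrand `(1 + s x₁)^(-(b + 3a))` dominates `(1 + s x₁)⁻¹`, so for
`x₂ ≠ 0` the integral drives the `y`-component to infinity whatever the initial `y` is. For the sup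
norm, `‖x‖ = x₁` on the sector `W`, where H1 and H2 become polynomial inequalities in `x₁`.
-/

open Metric Set Filter Asymptotics Topology

noncomputable section

section Flow

variable {E : Type*} [NormedAddCommGroup E] [NormedSpace ℝ E] {v : E → E} {U : Set E}
  {φ ψ : ℝ → E → E} {z : E} {s t τ : ℝ}

theorem eqOn_Ici_of_isIntegralCurveOn (hv : LocallyLipschitz v) {f g : ℝ → E} {t₀ : ℝ}
    (hf : IsIntegralCurveOn f (fun _ => v) (Ici t₀))
    (hg : IsIntegralCurveOn g (fun _ => v) (Ici t₀)) (h₀ : f t₀ = g t₀) :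
    EqOn f g (Ici t₀) := by
  intro T hT
  have hfT := hf.mono (Icc_subset_Ici_self : Icc t₀ T ⊆ Ici t₀)
  have hgT := hg.mono (Icc_subset_Ici_self : Icc t₀ T ⊆ Ici t₀)
  have hcompact : IsCompact (f '' Icc t₀ T ∪ g '' Icc t₀ T) :=
    (isCompact_Icc.image_of_continuousOn hfT.continuousOn).union
      (isCompact_Icc.image_of_continuousOn hgT.continuousOn)
  obtain ⟨K, hK⟩ := hv.locallyLipschitzOn.exists_lipschitzOnWith_of_compact hcompact
  exact ODE_solution_unique_of_mem_Icc_right (fun _ _ => hK)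
    hfT.continuousOn (fun t ht => (hf t ht.1).mono (Ici_subset_Ici.2 ht.1))
    (fun t ht => .inl (mem_image_of_mem f (Ico_subset_Icc_self ht)))
    hgT.continuousOn (fun t ht => (hg t ht.1).mono (Ici_subset_Ici.2 ht.1))
    (fun t ht => .inr (mem_image_of_mem g (Ico_subset_Icc_self ht)))
    h₀ ⟨hT, le_rfl⟩

/-- `φ` is a forward flow of the autonomous vector field `v` with initial points in `U`. Neither
the invariance of `U` nor the behaviour of `φ` outside `U` is part of the notion. -/
structure IsForwardFlowOn (v : E → E) (U : Set E) (φ : ℝ → E → E) : Prop where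
  map_zero : ∀ z ∈ U, φ 0 z = z
  isIntegralCurveOn : ∀ z ∈ U, IsIntegralCurveOn (φ · z) (fun _ => v) (Ici 0)

namespace IsForwardFlowOn

theorem eq_of_mem (hv : LocallyLipschitz v) (hφ : IsForwardFlowOn v U φ)
    (hψ : IsForwardFlowOn v U ψ) (hz : z ∈ U) (ht : 0 ≤ t) : φ t z = ψ t z :=
  eqOn_Ici_of_isIntegralCurveOn hv (hφ.isIntegralCurveOn z hz) (hψ.isIntegralCurveOn z hz)
    ((hφ.map_zero z hz).trans (hψ.map_zero z hz).symm) ht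

theorem map_add (hv : LocallyLipschitz v) (hφ : IsForwardFlowOn v U φ) (hz : z ∈ U)
    (hs : 0 ≤ s) (hsz : φ s z ∈ U) (ht : 0 ≤ t) : φ (t + s) z = φ t (φ s z) := by
  have hshift : IsIntegralCurveOn ((φ · z) ∘ (· + s)) (fun _ => v) (Ici 0) :=
    ((hφ.isIntegralCurveOn z hz).comp_add s).mono fun r (hr : 0 ≤ r) =>
      mem_vadd_set_iff_neg_vadd_mem.2 (by simpa using add_nonneg hs hr)
  refine eqOn_Ici_of_isIntegralCurveOn hv hshift (hφ.isIntegralCurveOn _ hsz) ?_ ht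
  simp [hφ.map_zero _ hsz]

theorem iterate_eq (hv : LocallyLipschitz v) (hφ : IsForwardFlowOn v U φ)
    (hU : ∀ t, 0 ≤ t → MapsTo (φ t) U U) (hτ : 0 ≤ τ) (hz : z ∈ U) (n : ℕ) :
    (φ τ)^[n] z = φ (n * τ) z := by
  induction n with
  | zero => simp [hφ.map_zero z hz]
  | succ n ih =>
    have hn : 0 ≤ n * τ := by positivity
    rw [Function.iterate_succ_apply', ih, ← hφ.map_add hv hz hn (hU _ hn hz) hτ]
    congr 1
    push_cast
    ring

end IsForwardFlowOn

end Flow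

section Rpow

variable {x t r : ℝ}

theorem hasDerivAt_one_add_mul (x t : ℝ) : HasDerivAt (fun s => 1 + s * x) x t :=
  (hasDerivAt_mul_const x).const_add 1

theorem one_add_mul_pos_of_mem_uIcc {s : ℝ} (h : 0 < 1 + t * x) (hs : s ∈ uIcc 0 t) :
    0 < 1 + s * x := by
  rcases mem_uIcc.1 hs with ⟨h₁, h₂⟩ | ⟨h₁, h₂⟩ <;> rcases le_total 0 x with hx | hx <;> nlinarith

theorem hasDerivAt_one_add_mul_rpow (r : ℝ) (h : 0 < 1 + t * x) :
    HasDerivAt (fun s => (1 + s * x) ^ r) (r * (x / (1 + t * x)) * (1 + t * x) ^ r) t := by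
  refine ((hasDerivAt_one_add_mul x t).rpow_const (p := r) (.inl h.ne')).congr_deriv ?_
  rw [Real.rpow_sub_one h.ne']
  ring

theorem hasDerivAt_integral_one_add_mul_rpow (r : ℝ) (h : 0 < 1 + t * x) :
    HasDerivAt (fun t => ∫ s in (0 : ℝ)..t, (1 + s * x) ^ r) ((1 + t * x) ^ r) t := by
  have hcont : ∀ s ∈ uIcc 0 t, ContinuousAt (fun s => (1 + s * x) ^ r) s := fun s hs =>
    (hasDerivAt_one_add_mul_rpow r (one_add_mul_pos_of_mem_uIcc h hs)).continuousAt
  have hmeas : Measurable fun s : ℝ => (1 + s * x) ^ r := by fun_prop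
  exact intervalIntegral.integral_hasDerivAt_right
    (continuousOn_of_forall_continuousAt hcont).intervalIntegrable
    hmeas.stronglyMeasurable.stronglyMeasurableAtFilter (hcont t right_mem_uIcc)

theorem tendsto_integral_one_rpow_atTop (hr : -1 ≤ r) :
    Tendsto (fun T => ∫ u in (1 : ℝ)..T, u ^ r) atTop atTop := by
  refine tendsto_atTop_mono' _ ?_ Real.tendsto_log_atTop
  filter_upwards [eventually_ge_atTop 1] with T hT
  have hzero : (0 : ℝ) ∉ uIcc 1 T := notMem_uIcc_of_lt one_pos (one_pos.trans_le hT)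
  calc Real.log T = ∫ u in (1 : ℝ)..T, u ^ (-1 : ℝ) := by
        simp_rw [Real.rpow_neg_one, integral_inv hzero, div_one]
    _ ≤ ∫ u in (1 : ℝ)..T, u ^ r :=
        intervalIntegral.integral_mono_on hT
          (intervalIntegral.intervalIntegrable_rpow (.inr hzero))
          (intervalIntegral.intervalIntegrable_rpow (.inr hzero))
          fun u hu => Real.rpow_le_rpow_of_exponent_le hu.1 hr

theorem tendsto_integral_one_add_mul_rpow_atTop (hx : 0 < x) (hr : -1 ≤ r) :
    Tendsto (fun t => ∫ s in (0 : ℝ)..t, (1 + s * x) ^ r) atTop atTop := by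
  have hsubst : ∀ t, ∫ s in (0 : ℝ)..t, (1 + s * x) ^ r =
      x⁻¹ * ∫ u in (1 : ℝ)..1 + x * t, u ^ r := fun t => by
    simpa [mul_comm] using
      intervalIntegral.integral_comp_add_mul (a := 0) (b := t) (fun u => u ^ r) hx.ne' 1
  simp_rw [hsubst]
  exact ((tendsto_integral_one_rpow_atTop hr).comp
    (tendsto_atTop_add_const_left _ 1 (tendsto_id.const_mul_atTop hx))).const_mul_atTop
    (inv_pos.2 hx)

end Rpow

section ToySystem

/-- The degree-two part `p` of the `x`-component of the toy vector field. -/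
def toyP (a : ℝ) (z : (ℝ × ℝ) × ℝ) : ℝ × ℝ := (-z.1.1 ^ 2, -a * z.1.1 * z.1.2)

/-- The degree-two part `q` of the `y`-component of the toy vector field. -/
def toyQ (b : ℝ) (z : (ℝ × ℝ) × ℝ) : ℝ := b * z.1.1 * z.2

/-- The toy vector field, with right-hand side `(-x₁², -a x₁ x₂, b x₁ y + x₂³)`. -/
def toyField (a b : ℝ) (z : (ℝ × ℝ) × ℝ) : (ℝ × ℝ) × ℝ := (toyP a z, toyQ b z + z.1.2 ^ 3)

/-- The explicit solution at time `t` of the toy system with initial point `z`; it is meaningful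
as long as `1 + t x₁ > 0`. -/
def toySolution (a b t : ℝ) (z : (ℝ × ℝ) × ℝ) : (ℝ × ℝ) × ℝ :=
  ((z.1.1 / (1 + t * z.1.1), z.1.2 / (1 + t * z.1.1) ^ a),
    (1 + t * z.1.1) ^ b *
      (z.2 + z.1.2 ^ 3 * ∫ s in (0 : ℝ)..t, (1 + s * z.1.1) ^ (-(b + 3 * a))))

variable {a b t : ℝ} {z : (ℝ × ℝ) × ℝ}

theorem locallyLipschitz_toyField (a b : ℝ) : LocallyLipschitz (toyField a b) := by
  have hsmooth : ContDiff ℝ 1 (toyField a b) := by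
    unfold toyField toyP toyQ
    fun_prop
  exact hsmooth.locallyLipschitz

theorem hasDerivAt_toySolution_fst_fst (h : 0 < 1 + t * z.1.1) :
    HasDerivAt (fun s => (toySolution a b s z).1.1) (-(toySolution a b t z).1.1 ^ 2) t := by
  refine (((hasDerivAt_one_add_mul z.1.1 t).inv h.ne').const_mul z.1.1).congr_deriv ?_
  simp only [toySolution]
  field_simp

theorem hasDerivAt_toySolution_fst_snd (h : 0 < 1 + t * z.1.1) :
    HasDerivAt (fun s => (toySolution a b s z).1.2)
      (-a * (toySolution a b t z).1.1 * (toySolution a b t z).1.2) t := by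
  refine (((hasDerivAt_one_add_mul_rpow a h).inv (Real.rpow_pos_of_pos h a).ne').const_mul
    z.1.2).congr_deriv ?_
  simp only [toySolution]
  field_simp

theorem hasDerivAt_toySolution_snd (h : 0 < 1 + t * z.1.1) :
    HasDerivAt (fun s => (toySolution a b s z).2)
      (b * (toySolution a b t z).1.1 * (toySolution a b t z).2 +
        (toySolution a b t z).1.2 ^ 3) t := by
  have hexp : (1 + t * z.1.1) ^ b * (1 + t * z.1.1) ^ (-(b + 3 * a)) =
      (((1 + t * z.1.1) ^ a) ^ 3)⁻¹ := by
    rw [← Real.rpow_add h, ← Real.rpow_natCast, ← Real.rpow_mul h.le, ← Real.rpow_neg h.le]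
    congr 1
    push_cast
    ring
  refine ((hasDerivAt_one_add_mul_rpow b h).mul
    (((hasDerivAt_integral_one_add_mul_rpow (-(b + 3 * a)) h).const_mul
      (z.1.2 ^ 3)).const_add z.2)).congr_deriv ?_
  simp only [toySolution]
  rw [div_pow, div_eq_mul_inv (z.1.2 ^ 3), ← hexp]
  ring

theorem hasDerivAt_toySolution (h : 0 < 1 + t * z.1.1) :
    HasDerivAt (fun s => toySolution a b s z) (toyField a b (toySolution a b t z)) t :=
  ((hasDerivAt_toySolution_fst_fst h).prodMk (hasDerivAt_toySolution_fst_snd h)).prodMk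
    (hasDerivAt_toySolution_snd h)

theorem isForwardFlowOn_toySolution (a b : ℝ) :
    IsForwardFlowOn (toyField a b) {z | 0 < z.1.1} (toySolution a b) where
  map_zero z _ := by simp [toySolution]
  isIntegralCurveOn z (hz : 0 < z.1.1) t (ht : 0 ≤ t) :=
    (hasDerivAt_toySolution (by positivity)).hasDerivWithinAt

theorem iterate_timeOne_eq_toySolution {φ : ℝ → (ℝ × ℝ) × ℝ → (ℝ × ℝ) × ℝ}
    (hφ : IsForwardFlowOn (toyField a b) {z | 0 < z.1.1} φ) (hz : 0 < z.1.1) (n : ℕ) :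
    (φ 1)^[n] z = toySolution a b n z := by
  have hv := locallyLipschitz_toyField a b
  have heq : ∀ t, 0 ≤ t → EqOn (φ t) (toySolution a b t) {z | 0 < z.1.1} := fun t ht w hw =>
    hφ.eq_of_mem hv (isForwardFlowOn_toySolution a b) hw ht
  have hinv : ∀ t, 0 ≤ t → MapsTo (φ t) {z | 0 < z.1.1} {z | 0 < z.1.1} :=
    fun t ht w (hw : 0 < w.1.1) => by
      rw [heq t ht hw]
      exact div_pos hw (by positivity)
  rw [hφ.iterate_eq hv hinv zero_le_one hz, mul_one, heq n n.cast_nonneg hz]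

theorem tendsto_toySolution_snd_cobounded (hb : 0 ≤ b) (hab : b + 3 * a ≤ 1)
    (hz₁ : 0 < z.1.1) (hz₂ : z.1.2 ≠ 0) :
    Tendsto (fun t => (toySolution a b t z).2) atTop (Bornology.cobounded ℝ) := by
  have hint : Tendsto (fun t => ∫ s in (0 : ℝ)..t, (1 + s * z.1.1) ^ (-(b + 3 * a))) atTop
      (Bornology.cobounded ℝ) :=
    (tendsto_integral_one_add_mul_rpow_atTop hz₁ (by linarith)).mono_right
      IsOrderBornology.atTop_le_cobounded
  have hbracket := (tendsto_const_add_cobounded z.2).comp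
    ((tendsto_mul_left_cobounded (pow_ne_zero 3 hz₂)).comp hint)
  rw [← tendsto_norm_atTop_iff_cobounded] at hbracket ⊢
  refine tendsto_atTop_mono' _ ?_ hbracket
  filter_upwards [eventually_ge_atTop 0] with t ht
  have hfactor : 1 ≤ (1 + t * z.1.1) ^ b :=
    Real.one_le_rpow (le_add_of_nonneg_right (by positivity)) hb
  rw [toySolution, norm_mul]
  exact le_mul_of_one_le_left (norm_nonneg _) (hfactor.trans (le_abs_self _))

theorem not_tendsto_toySolution_nhds (hb : 0 ≤ b) (hab : b + 3 * a ≤ 1)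
    (hz₁ : 0 < z.1.1) (hz₂ : z.1.2 ≠ 0) (w : (ℝ × ℝ) × ℝ) :
    ¬ Tendsto (fun n : ℕ => toySolution a b n z) atTop (𝓝 w) := fun h =>
  ((tendsto_toySolution_snd_cobounded hb hab hz₁ hz₂).comp
    tendsto_natCast_atTop_atTop).not_tendsto (Metric.disjoint_cobounded_nhds _) h.snd_nhds

end ToySystem

section StarShaped

variable {E : Type*} [NormedAddCommGroup E] [NormedSpace ℝ E] {V : Set E}

theorem starShaped0_of_nonempty (hne : V.Nonempty) (h₀ : (0 : E) ∉ V)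
    (hV : ∀ x ∈ V, ∀ t ∈ Ioo (0 : ℝ) 1, t • x ∈ V) : StarShaped0 V := by
  obtain ⟨x, hx⟩ := hne
  have hlim : Tendsto (fun t : ℝ => t • x) (𝓝[>] 0) (𝓝 0) :=
    (Continuous.tendsto' (by fun_prop) 0 0 (zero_smul ℝ x)).mono_left nhdsWithin_le_nhds
  have hmem : ∀ᶠ t : ℝ in 𝓝[>] 0, t • x ∈ V := by
    filter_upwards [Ioo_mem_nhdsGT one_pos] with t ht using hV x hx t ht
  exact ⟨⟨mem_closure_of_tendsto hlim hmem, fun h => h₀ (interior_subset h)⟩, hV⟩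

end StarShaped

section Hypotheses

variable {E F : Type*} [NormedAddCommGroup E] [NormedAddCommGroup F] {V : Set E} {ρ c : ℝ}

theorem Vrho_nonempty_of_mem_closure (h₀ : (0 : E) ∈ closure V) (hρ : 0 < ρ) :
    (Vrho V ρ).Nonempty := by
  rw [Vrho, inter_comm]
  exact mem_closure_iff.1 h₀ _ isOpen_ball (mem_ball_self hρ)

theorem le_apC {p : E × F → E} {N : ℕ} (hne : (Vrho V ρ).Nonempty) (h₀ : (0 : E) ∉ V)
    (h : ∀ x ∈ Vrho V ρ, ‖x + p (x, 0)‖ ≤ ‖x‖ - c * ‖x‖ ^ N) : c ≤ apC p V ρ N := by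
  refine le_neg_of_le_neg (csSup_le (hne.image _) ?_)
  rintro _ ⟨x, hx, rfl⟩
  have hx₀ : 0 < ‖x‖ := norm_pos_iff.2 (ne_of_mem_of_not_mem hx.1 h₀)
  rw [div_le_iff₀ (by positivity)]
  linarith [h x hx]

theorem le_BqC [NormedSpace ℝ F] {q : E × F → F} {M : ℕ} (hne : (Vrho V ρ).Nonempty)
    (h₀ : (0 : E) ∉ V)
    (h : ∀ x ∈ Vrho V ρ, ‖ContinuousLinearMap.id ℝ F - fderiv ℝ (fun y => q (x, y)) 0‖ ≤
      1 - c * ‖x‖ ^ (M - 1)) : c ≤ BqC q V ρ M := by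
  refine le_neg_of_le_neg (csSup_le (hne.image _) ?_)
  rintro _ ⟨x, hx, rfl⟩
  have hx₀ : 0 < ‖x‖ := norm_pos_iff.2 (ne_of_mem_of_not_mem hx.1 h₀)
  rw [div_le_iff₀ (by positivity)]
  linarith [h x hx]

end Hypotheses

section ToyDomain

/-- The sector `W` on which the toy model satisfies H1 and H2. -/
def toyDomain (a : ℝ) : Set (ℝ × ℝ) :=
  {x | |x.2| < (1 - a) * x.1 ∧ (1 - a) * x.1 < 2 / (a + 1)}

variable {a b ρ : ℝ} {x : ℝ × ℝ} {V : Set (ℝ × ℝ)}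

theorem isOpen_toyDomain (a : ℝ) : IsOpen (toyDomain a) := by
  rw [toyDomain, ofPred_and]
  exact (isOpen_lt (by fun_prop) (by fun_prop)).inter (isOpen_lt (by fun_prop) (by fun_prop))

theorem zero_notMem_toyDomain (a : ℝ) : (0 : ℝ × ℝ) ∉ toyDomain a := fun h => by
  simpa using h.1

theorem toyDomain_nonempty (ha : -1 < a) (ha1 : a ≠ 1) : (toyDomain a).Nonempty := by
  have ha₁ : 0 < a + 1 := by linarith
  have hfst : (1 - a) * (1 / ((1 - a) * (a + 1))) = 1 / (a + 1) := by
    field_simp [sub_ne_zero.2 ha1.symm]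
  refine ⟨(1 / ((1 - a) * (a + 1)), 0), ?_, ?_⟩
  · simpa only [hfst, abs_zero] using one_div_pos.2 ha₁
  · simpa only [hfst] using div_lt_div_of_pos_right one_lt_two ha₁

theorem starShaped0_toyDomain (ha : -1 < a) (ha1 : a ≠ 1) : StarShaped0 (toyDomain a) := by
  refine starShaped0_of_nonempty (toyDomain_nonempty ha ha1) (zero_notMem_toyDomain a) ?_
  rintro x ⟨hsector, hbound⟩ t ⟨ht₀, ht₁⟩
  have hpos : 0 < (1 - a) * x.1 := (abs_nonneg _).trans_lt hsector
  constructor <;> simp only [Prod.smul_fst, Prod.smul_snd, smul_eq_mul, abs_mul, abs_of_pos ht₀] <;>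
    nlinarith

theorem fst_pos_of_mem_toyDomain (ha1 : a < 1) (hx : x ∈ toyDomain a) : 0 < x.1 :=
  pos_of_mul_pos_right ((abs_nonneg _).trans_lt hx.1) (sub_nonneg.2 ha1.le)

theorem norm_eq_fst_of_mem_toyDomain (ha : 0 ≤ a) (ha1 : a < 1) (hx : x ∈ toyDomain a) :
    ‖x‖ = x.1 := by
  have hx₁ := fst_pos_of_mem_toyDomain ha1 hx
  rw [Prod.norm_def, Real.norm_of_nonneg hx₁.le]
  exact max_eq_left (hx.1.le.trans (by nlinarith))

theorem norm_add_toyP_le (ha : 0 ≤ a) (ha1 : a < 1) (hx : x ∈ toyDomain a) (hxa : x.1 ≤ a) :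
    ‖x + toyP a (x, 0)‖ ≤ x.1 - x.1 ^ 2 := by
  have hx₁ := fst_pos_of_mem_toyDomain ha1 hx
  have hfactor : 0 ≤ 1 - a * x.1 := by nlinarith
  refine max_le ?_ ?_
  · change |x.1 + -x.1 ^ 2| ≤ x.1 - x.1 ^ 2
    rw [← sub_eq_add_neg, abs_of_nonneg (by nlinarith)]
  · calc |x.2 + -a * x.1 * x.2| = (1 - a * x.1) * |x.2| := by
          rw [show x.2 + -a * x.1 * x.2 = (1 - a * x.1) * x.2 by ring, abs_mul,
            abs_of_nonneg hfactor]
      _ ≤ (1 - a * x.1) * ((1 - a) * x.1) := by gcongr; exact hx.1.le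
      _ ≤ x.1 - x.1 ^ 2 := by
          have hgap : 0 ≤ a - x.1 * (1 - a * (1 - a)) := by
            nlinarith [mul_nonneg hx₁.le (mul_nonneg ha (sub_nonneg.2 ha1.le))]
          nlinarith

theorem one_le_apC_toyP (ha : 0 ≤ a) (ha1 : a < 1) (hVW : V ⊆ toyDomain a)
    (hne : (Vrho V ρ).Nonempty) (hρ : ρ ≤ a) : 1 ≤ apC (toyP a) V ρ 2 := by
  refine le_apC hne (fun h => zero_notMem_toyDomain a (hVW h)) fun x hx => ?_
  have hnorm := norm_eq_fst_of_mem_toyDomain ha ha1 (hVW hx.1)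
  have hxa : x.1 ≤ a := hnorm ▸ (mem_ball_zero_iff.1 hx.2).le.trans hρ
  simpa only [hnorm, one_mul] using norm_add_toyP_le ha ha1 (hVW hx.1) hxa

theorem norm_id_sub_fderiv_toyQ (b : ℝ) (x : ℝ × ℝ) (y : ℝ) :
    ‖ContinuousLinearMap.id ℝ ℝ - fderiv ℝ (fun y => toyQ b (x, y)) y‖ = |1 - b * x.1| := by
  have hderiv : HasFDerivAt (fun y => toyQ b (x, y)) ((b * x.1) • ContinuousLinearMap.id ℝ ℝ) y :=
    (hasFDerivAt_id y).const_mul (b * x.1)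
  have hsub : ContinuousLinearMap.id ℝ ℝ - (b * x.1) • ContinuousLinearMap.id ℝ ℝ =
      (1 - b * x.1) • ContinuousLinearMap.id ℝ ℝ := by
    ext; simp
  rw [hderiv.fderiv, hsub, norm_smul, ContinuousLinearMap.norm_id, mul_one, Real.norm_eq_abs]

theorem le_BqC_toyQ (ha : 0 ≤ a) (ha1 : a < 1) (hb : 0 ≤ b) (hVW : V ⊆ toyDomain a)
    (hne : (Vrho V ρ).Nonempty) (hρ : b * ρ ≤ 1) : b ≤ BqC (toyQ b) V ρ 2 := by
  refine le_BqC hne (fun h => zero_notMem_toyDomain a (hVW h)) fun x hx => ?_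
  have hnorm := norm_eq_fst_of_mem_toyDomain ha ha1 (hVW hx.1)
  have hxρ : x.1 ≤ ρ := hnorm ▸ (mem_ball_zero_iff.1 hx.2).le
  have hbx : b * x.1 ≤ 1 := (mul_le_mul_of_nonneg_left hxρ hb).trans hρ
  rw [norm_id_sub_fderiv_toyQ, abs_of_nonneg (sub_nonneg.2 hbx), hnorm, pow_one]

theorem hypH1_and_hypH2_toy (ha : 0 ≤ a) (ha1 : a < 1) (hb : 0 ≤ b) (hVW : V ⊆ toyDomain a)
    (h₀ : 0 ∈ closure V) (hρ : 0 < ρ) (hρa : ρ ≤ a) (hρb : b * ρ ≤ 1) :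
    HypH1 (toyP a) V ρ 2 ∧ HypH2 (toyP a) (toyQ b) V ρ 2 2 := by
  have hne := Vrho_nonempty_of_mem_closure h₀ hρ
  have hap := one_le_apC_toyP ha ha1 hVW hne hρa
  have hBq := le_BqC_toyQ ha ha1 hb hVW hne hρb
  refine ⟨one_pos.trans_le hap, fun x _ => mul_zero _, fun h => absurd h (lt_irrefl _), fun _ => ?_⟩
  push_cast
  linarith

end ToyDomain

/-- Section 7.1, a toy model: a map satisfying H1 and H2 on a suitable
star-shaped domain, with explicit iteration formulas, which has no stable invariant
manifold at the origin when `b + 3a ≤ 1`. -/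
theorem toy_model_no_stable_manifold
    (a b : ℝ) (ha : 0 < a) (hb : 0 < b)
    (φ : ℝ → (ℝ × ℝ) × ℝ → (ℝ × ℝ) × ℝ)
    -- φ is the flow of ẋ₁ = -x₁², ẋ₂ = -a x₁ x₂, ẏ = b x₁ y + x₂³ (forward in time,
    -- on the half-space x₁ > 0)
    (hφ0 : ∀ z, φ 0 z = z)
    (hφ : ∀ z : (ℝ × ℝ) × ℝ, 0 < z.1.1 → ∀ t : ℝ, 0 ≤ t →
      HasDerivAt (fun s => φ s z)
        ((-(φ t z).1.1 ^ 2, -a * (φ t z).1.1 * (φ t z).1.2),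
          b * (φ t z).1.1 * (φ t z).2 + (φ t z).1.2 ^ 3) t)
    (F : (ℝ × ℝ) × ℝ → (ℝ × ℝ) × ℝ) (hF : F = φ 1)
    (W : Set (ℝ × ℝ))
    (hW : W = {x : ℝ × ℝ | |x.2| < (1 - a) * x.1 ∧ (1 - a) * x.1 < 2 / (a + 1)}) :
    -- (i) there is an open star-shaped V ⊆ W on which F satisfies H1 and H2
    (a < 1 → ∃ V : Set (ℝ × ℝ), IsOpen V ∧ StarShaped0 V ∧ V ⊆ W ∧
      ∃ ρ > (0 : ℝ),
        HypH1 (fun z : (ℝ × ℝ) × ℝ => (-z.1.1 ^ 2, -a * z.1.1 * z.1.2)) V ρ 2 ∧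
        HypH2 (fun z : (ℝ × ℝ) × ℝ => (-z.1.1 ^ 2, -a * z.1.1 * z.1.2))
          (fun z : (ℝ × ℝ) × ℝ => b * z.1.1 * z.2) V ρ 2 2) ∧
    -- (ii) explicit iteration formulas for x₁ > 0
    (∀ x₁ x₂ y : ℝ, 0 < x₁ → ∀ n : ℕ,
      (F^[n] ((x₁, x₂), y)).1 =
        (x₁ / (1 + n * x₁), x₂ / (1 + n * x₁) ^ (a : ℝ)) ∧
      (F^[n] ((x₁, x₂), y)).2 =
        (1 + n * x₁) ^ (b : ℝ) *
          (y + x₂ ^ 3 * ∫ s in (0 : ℝ)..(n : ℝ), (1 + s * x₁) ^ (-(b + 3 * a)))) ∧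
    -- (iii) if b + 3a ≤ 1, no orbit with x₁ > 0, x₂ ≠ 0 converges to the origin, hence
    -- F has no stable invariant manifold of the origin over W
    (b + 3 * a ≤ 1 →
      (∀ x₁ x₂ y : ℝ, 0 < x₁ → x₂ ≠ 0 →
        ¬ Tendsto (fun n => F^[n] ((x₁, x₂), y)) atTop (𝓝 0)) ∧
      {z : (ℝ × ℝ) × ℝ | (∀ k : ℕ, (F^[k] z).1 ∈ W) ∧
          Tendsto (fun k => F^[k] z) atTop (𝓝 0)} ⊆
        {z : (ℝ × ℝ) × ℝ | z.1.2 = 0}) := by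
  subst hF hW
  have hflow : IsForwardFlowOn (toyField a b) {z | 0 < z.1.1} φ :=
    ⟨fun z _ => hφ0 z, fun z hz t ht => (hφ z hz t ht).hasDerivWithinAt⟩
  have hiter : ∀ x₁ x₂ y, 0 < x₁ → ∀ n : ℕ,
      (φ 1)^[n] ((x₁, x₂), y) = toySolution a b n ((x₁, x₂), y) :=
    fun _ _ _ hx n => iterate_timeOne_eq_toySolution hflow hx n
  have hdiverge : b + 3 * a ≤ 1 → ∀ x₁ x₂ y, 0 < x₁ → x₂ ≠ 0 →
      ¬ Tendsto (fun n => (φ 1)^[n] ((x₁, x₂), y)) atTop (𝓝 0) := fun hab x₁ x₂ y hx₁ hx₂ => by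
    simpa only [hiter x₁ x₂ y hx₁] using not_tendsto_toySolution_nhds hb.le hab hx₁ hx₂ 0
  refine ⟨fun ha1 => ?_, fun x₁ x₂ y hx n => ?_, fun hab => ⟨hdiverge hab, ?_⟩⟩
  · have hW := starShaped0_toyDomain (by linarith) ha1.ne
    refine ⟨toyDomain a, isOpen_toyDomain a, hW, subset_rfl, min a b⁻¹, by positivity,
      hypH1_and_hypH2_toy ha.le ha1 hb.le subset_rfl (frontier_subset_closure hW.1)
        (by positivity) (min_le_left _ _) ?_⟩
    exact (mul_le_mul_of_nonneg_left (min_le_right _ _) hb.le).trans_eq (mul_inv_cancel₀ hb.ne')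
  · rw [hiter x₁ x₂ y hx n]
    exact ⟨rfl, rfl⟩
  · rintro ⟨⟨x₁, x₂⟩, y⟩ ⟨hmem, hlim⟩
    by_contra hx₂
    have hx₁ : 0 < x₁ := fst_pos_of_mem_toyDomain (a := a) (by linarith) (hmem 0)
    exact hdiverge hab x₁ x₂ y hx₁ hx₂ hlim
end
end
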